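/- arXiv:2105.07056 — 2 statements merged into one kernel-verified Lean document; each statement's English description precedes it below -/
import Mathlib

section
/- For every integer s ≥ 1 there exists a constant c > 0, depending only on s, such that: for every 2π-periodic function f : ℝ → ℂ of class C^s with zero mean (∫_{−π}^{π} f(α) dα = 0), every even integer N ≥ 2 (with h = 2π/N), and every grid index j ∈ {−N/2+1, …, N/2}, |∂_α^{−1}f(α_j) − (S_h^{−1} f(α_·))(α_j)| ≤ c h^{s−1/2} ‖f‖_s, where ∂_α^{−1} f(α) = Σ_{k∈ℤ, k≠0} (f̂_k^e/(ik)) e^{ikα} is the zero-mean antiderivative of f and S_h^{−1} is applied to the discrete function of samples of f. -/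
open scoped BigOperators
open Finset

noncomputable section

/-- Grid spacing `h = 2π/N`. -/
def hgrid (N : ℤ) : ℝ := 2 * Real.pi / N

/-- Grid points `α_j = j h`. -/
def gridPt (N : ℤ) (j : ℤ) : ℝ := j * hgrid N

/-- Index set `{-N/2+1, …, N/2}`. -/
def idxs (N : ℤ) : Finset ℤ := Finset.Icc (-(N / 2) + 1) (N / 2)

/-- Discrete Fourier coefficient `f̂_k`. -/
def dft (N : ℤ) (f : ℤ → ℂ) (k : ℤ) : ℂ :=
  (N : ℂ)⁻¹ * ∑ j ∈ idxs N, f j * Complex.exp (-(Complex.I * (k : ℂ) * (gridPt N j : ℂ)))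

/-- Reconstruction of a discrete function from Fourier coefficients. -/
def idft (N : ℤ) (c : ℤ → ℂ) (j : ℤ) : ℂ :=
  ∑ k ∈ idxs N, c k * Complex.exp (Complex.I * (k : ℂ) * (gridPt N j : ℂ))

/-- The pseudo-spectral derivative `S_h`. -/
def Sh (N : ℤ) (f : ℤ → ℂ) : ℤ → ℂ :=
  idft N fun k => if k = N / 2 then 0 else Complex.I * (k : ℂ) * dft N f k

/-- The pseudo-spectral antiderivative `S_h⁻¹`. -/
def Shinv (N : ℤ) (f : ℤ → ℂ) : ℤ → ℂ :=
  idft N fun k => if k = 0 then 0 else dft N f k / (Complex.I * (k : ℂ))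

/-- The filtered discrete function `f^p`. -/
def filterP (N : ℤ) (ρ : ℝ → ℝ) (f : ℤ → ℂ) : ℤ → ℂ :=
  idft N fun k => (ρ (gridPt N k) : ℂ) * dft N f k

/-- The filtered derivative `D_h`. -/
def Dh (N : ℤ) (ρ : ℝ → ℝ) (f : ℤ → ℂ) : ℤ → ℂ :=
  idft N fun k => Complex.I * (k : ℂ) * (ρ (gridPt N k) : ℂ) * dft N f k

/-- Discrete `l²` norm. -/
def l2norm (N : ℤ) (f : ℤ → ℂ) : ℝ :=
  Real.sqrt (hgrid N * ∑ j ∈ idxs N, ‖f j‖ ^ 2)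

/-- Discrete Hilbert transform `H_h`. -/
def Hh (N : ℤ) (f : ℤ → ℂ) (i : ℤ) : ℂ :=
  ((hgrid N / Real.pi : ℝ) : ℂ) *
    ∑ j ∈ (idxs N).filter (fun j => Odd (j - i)),
      f j * (Real.cot ((gridPt N i - gridPt N j) / 2) : ℂ)

/-- Discrete inner product `(f,g)_h`. -/
def dip (N : ℤ) (f g : ℤ → ℂ) : ℂ :=
  (hgrid N : ℂ) * ∑ j ∈ idxs N, (starRingEnd ℂ) (f j) * g j

/-- Discrete mean `⟨f⟩_h`. -/
def dmean (N : ℤ) (f : ℤ → ℂ) : ℂ :=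
  (N : ℂ)⁻¹ * ∑ j ∈ idxs N, f j

/-- The discrete function of samples of a periodic function. -/
def samples (N : ℤ) (f : ℝ → ℂ) : ℤ → ℂ := fun j => f (gridPt N j)

/-- Fourier coefficient of a `2π`-periodic function. -/
def fourierCoeffP (f : ℝ → ℂ) (k : ℤ) : ℂ :=
  ((2 * Real.pi)⁻¹ : ℝ) * ∫ α in (-Real.pi)..Real.pi, f α * Complex.exp (-(Complex.I * (k : ℂ) * (α : ℂ)))

/-- Sobolev norm `‖f‖_s`. -/
def sobolevNorm (s : ℕ) (f : ℝ → ℂ) : ℝ :=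
  Real.sqrt (∑' k : ℤ, (1 + (k : ℝ) ^ 2) ^ s * ‖fourierCoeffP f k‖ ^ 2)

/-- A filter (cutoff) function for numerical filtering. -/
structure IsFilter (ρ : ℝ → ℝ) : Prop where
  even : ∀ x, ρ (-x) = ρ x
  nonneg : ∀ x, 0 ≤ ρ x
  smooth : ∃ r : ℕ, 2 < r ∧ ContDiff ℝ r ρ
  zero_at_pi : ρ Real.pi = 0
  zero_at_neg_pi : ρ (-Real.pi) = 0
  deriv_zero_at_pi : deriv ρ Real.pi = 0
  deriv_zero_at_neg_pi : deriv ρ (-Real.pi) = 0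
  one_near_zero : ∃ μ : ℝ, 0 < μ ∧ μ < 1 ∧ ∀ x : ℝ, |x| ≤ μ * Real.pi → ρ x = 1

/-- The zero-mean antiderivative `∂_α⁻¹ f` of a zero-mean periodic function. -/
def contAntideriv (f : ℝ → ℂ) (α : ℝ) : ℂ :=
  ∑' k : ℤ, if k = 0 then 0 else
    fourierCoeffP f k / (Complex.I * (k : ℂ)) * Complex.exp (Complex.I * (k : ℂ) * (α : ℂ))

/-! ### Fourier coefficients of smooth periodic functions -/

theorem fourierCoeffP_eq_fourierCoeffOn (f : ℝ → ℂ) (k : ℤ) :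
    fourierCoeffP f k =
      fourierCoeffOn (neg_lt_self Real.pi_pos) f k := by
  rw [fourierCoeffOn_eq_integral, fourierCoeffP, Complex.real_smul]
  have hT : Real.pi - -Real.pi = 2 * Real.pi := by ring
  congr 1
  · rw [hT, one_div]
  · refine intervalIntegral.integral_congr fun x _ => ?_
    have hpi : (Real.pi : ℂ) ≠ 0 := by exact_mod_cast Real.pi_ne_zero
    simp only [fourier_coe_apply, smul_eq_mul]
    rw [mul_comm]
    congr 2
    rw [hT]
    push_cast
    field_simp

theorem fourierCoeffP_deriv {f : ℝ → ℂ} (hper : Function.Periodic f (2 * Real.pi))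
    (hf : ContDiff ℝ 1 f) (k : ℤ) :
    fourierCoeffP (deriv f) k = Complex.I * k * fourierCoeffP f k := by
  have hderiv : ∀ x, HasDerivAt f (deriv f x) x := fun x =>
    (hf.differentiable (by norm_num) x).hasDerivAt
  have hint : IntervalIntegrable (deriv f) MeasureTheory.volume (-Real.pi) Real.pi :=
    (hf.continuous_deriv le_rfl).intervalIntegrable _ _
  have hends : f Real.pi = f (-Real.pi) := by
    rw [← hper (-Real.pi)]
    congr 1
    ring
  have hpi : (Real.pi : ℂ) ≠ 0 := by exact_mod_cast Real.pi_ne_zero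
  rcases eq_or_ne k 0 with rfl | hk
  · simp [fourierCoeffP, intervalIntegral.integral_deriv_eq_sub
      (fun x _ => (hderiv x).differentiableAt) hint, hends]
  · have hk' : (k : ℂ) ≠ 0 := by exact_mod_cast hk
    rw [fourierCoeffP_eq_fourierCoeffOn, fourierCoeffP_eq_fourierCoeffOn,
      fourierCoeffOn_of_hasDerivAt _ hk (fun x _ => hderiv x) hint, hends]
    push_cast
    field_simp
    ring

theorem Function.Periodic.deriv_of_real {f : ℝ → ℂ} {c : ℝ} (hper : Function.Periodic f c) :
    Function.Periodic (deriv f) c := by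
  intro x
  rw [← deriv_comp_add_const]
  congr 1
  exact funext hper

theorem summable_sq_norm_fourierCoeffP {f : ℝ → ℂ} (hf : Continuous f) :
    Summable fun k : ℤ => ‖fourierCoeffP f k‖ ^ 2 := by
  simp_rw [fourierCoeffP_eq_fourierCoeffOn]
  refine (hasSum_sq_fourierCoeffOn _ ?_).summable
  obtain ⟨C, hC⟩ := isCompact_Icc.exists_bound_of_continuousOn
    (hf.continuousOn (s := Set.Icc (-Real.pi) Real.pi))
  refine MeasureTheory.MemLp.of_bound hf.aestronglyMeasurable C ?_
  filter_upwards [MeasureTheory.ae_restrict_mem measurableSet_Ioc] with x hx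
  exact hC x (Set.Ioc_subset_Icc_self hx)

theorem summable_pow_mul_sq_norm_fourierCoeffP (s : ℕ) :
    ∀ {f : ℝ → ℂ}, Function.Periodic f (2 * Real.pi) → ContDiff ℝ s f →
      Summable fun k : ℤ => ((k : ℝ) ^ 2) ^ s * ‖fourierCoeffP f k‖ ^ 2 := by
  induction s with
  | zero =>
    intro f _ hf
    simpa using summable_sq_norm_fourierCoeffP hf.continuous
  | succ s ih =>
    intro f hper hf
    have hf' : ContDiff ℝ s (deriv f) :=
      (contDiff_succ_iff_deriv.1 (by exact_mod_cast hf)).2.2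
    refine (ih hper.deriv_of_real hf').congr fun k => ?_
    rw [fourierCoeffP_deriv hper (hf.of_le (by norm_cast; omega))]
    simp only [norm_mul, Complex.norm_I, Complex.norm_intCast, one_mul, mul_pow, sq_abs]
    ring

theorem summable_sobolev {s : ℕ} {f : ℝ → ℂ} (hper : Function.Periodic f (2 * Real.pi))
    (hf : ContDiff ℝ s f) :
    Summable fun k : ℤ => (1 + (k : ℝ) ^ 2) ^ s * ‖fourierCoeffP f k‖ ^ 2 := by
  refine Summable.of_norm_bounded_eventually
    ((summable_pow_mul_sq_norm_fourierCoeffP s hper hf).mul_left (2 ^ s)) ?_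
  filter_upwards [(Set.finite_singleton (0 : ℤ)).compl_mem_cofinite] with k hk
  have hk1 : (1 : ℝ) ≤ (k : ℝ) ^ 2 := by
    have : 0 < k ^ 2 := by positivity [show k ≠ 0 from hk]
    exact_mod_cast this
  rw [Real.norm_of_nonneg (by positivity), ← mul_assoc, ← mul_pow]
  gcongr
  linarith

theorem summable_fourierCoeffP {f : ℝ → ℂ} (hper : Function.Periodic f (2 * Real.pi))
    (hf : ContDiff ℝ 1 f) : Summable (fourierCoeffP f) := by
  refine Summable.of_norm_bounded_eventually
    ((summable_pow_mul_sq_norm_fourierCoeffP 1 hper (by exact_mod_cast hf)).add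
      (Real.summable_one_div_int_pow.2 one_lt_two)) ?_
  filter_upwards [(Set.finite_singleton (0 : ℤ)).compl_mem_cofinite] with k hk
  have hk0 : (k : ℝ) ≠ 0 := by exact_mod_cast hk
  have h1 := sq_nonneg (|(k : ℝ)| * ‖fourierCoeffP f k‖ - |(k : ℝ)|⁻¹)
  have h2 : (|(k : ℝ)| * ‖fourierCoeffP f k‖ - |(k : ℝ)|⁻¹) ^ 2 =
      (k : ℝ) ^ 2 * ‖fourierCoeffP f k‖ ^ 2 - 2 * ‖fourierCoeffP f k‖ + 1 / (k : ℝ) ^ 2 := by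
    rw [← sq_abs (k : ℝ)]
    have := abs_ne_zero.2 hk0
    field_simp
    ring
  have h3 := norm_nonneg (fourierCoeffP f k)
  rw [pow_one]
  linarith

/-- A `C¹` periodic function is the pointwise sum of its Fourier series. -/
theorem hasSum_fourierCoeffP {f : ℝ → ℂ} (hper : Function.Periodic f (2 * Real.pi))
    (hf : ContDiff ℝ 1 f) (x : ℝ) :
    HasSum (fun k : ℤ => fourierCoeffP f k * Complex.exp (Complex.I * k * x)) (f x) := by
  have : Fact (0 < 2 * Real.pi) := ⟨Real.two_pi_pos⟩
  have hpi : (Real.pi : ℂ) ≠ 0 := by exact_mod_cast Real.pi_ne_zero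
  let F : C(AddCircle (2 * Real.pi), ℂ) :=
    ⟨hper.lift, continuous_coinduced_dom.2 hf.continuous⟩
  have hF : ∀ y : ℝ, F (y : AddCircle (2 * Real.pi)) = f y := fun y => hper.lift_coe y
  have hcoeff : ∀ k, fourierCoeff F k = fourierCoeffP f k := by
    intro k
    rw [fourierCoeff_eq_intervalIntegral _ _ (-Real.pi), fourierCoeffP, Complex.real_smul,
      one_div, show -Real.pi + 2 * Real.pi = Real.pi by ring]
    congr 1
    refine intervalIntegral.integral_congr fun y _ => ?_
    simp only [fourier_coe_apply, smul_eq_mul, hF]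
    rw [mul_comm]
    congr 2
    push_cast
    field_simp
  have hsum : Summable (fourierCoeff F) :=
    (summable_fourierCoeffP hper hf).congr fun k => (hcoeff k).symm
  have := has_pointwise_sum_fourier_series_of_summable hsum (x : AddCircle (2 * Real.pi))
  rw [hF] at this
  convert this using 2 with k
  rw [hcoeff, fourier_coe_apply, smul_eq_mul]
  congr 2
  push_cast
  field_simp

/-! ### Discrete Fourier analysis of a single mode -/

/-- The samples of a mode depend only on the frequency modulo `N`. -/
theorem exp_gridPt_add_mul {N : ℤ} (hN : N ≠ 0) (k m j : ℤ) :
    Complex.exp (Complex.I * ((k + m * N : ℤ) : ℂ) * (gridPt N j : ℂ)) =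
      Complex.exp (Complex.I * (k : ℂ) * (gridPt N j : ℂ)) := by
  have hN' : (N : ℂ) ≠ 0 := by exact_mod_cast hN
  rw [Complex.exp_eq_exp_iff_exists_int]
  refine ⟨m * j, ?_⟩
  simp only [gridPt, hgrid]
  push_cast
  field_simp

theorem sum_idxs_pow {N : ℤ} (hN : 2 ≤ N) (hE : Even N) {w : ℂ} (hw : w ≠ 1)
    (hwN : w ^ N = 1) : ∑ j ∈ idxs N, w ^ j = 0 := by
  have hw0 : w ≠ 0 := by
    rintro rfl
    rw [zero_zpow N (by omega)] at hwN
    exact zero_ne_one hwN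
  obtain ⟨M, rfl⟩ := hE
  lift M to ℕ using by omega
  have himage : idxs (M + M) =
      (Finset.range (M + M)).image fun i : ℕ => (i : ℤ) + (-(M : ℤ) + 1) := by
    ext j
    simp only [idxs, Finset.mem_Icc, Finset.mem_image, Finset.mem_range]
    constructor
    · intro hj
      exact ⟨(j + M - 1).toNat, by omega, by omega⟩
    · rintro ⟨i, hi, rfl⟩
      omega
  rw [himage, Finset.sum_image (by intro a _ b _ h; simpa using h)]
  simp_rw [zpow_add₀ hw0 _ (-(M : ℤ) + 1), zpow_natCast]
  rw [← Finset.sum_mul, geom_sum_eq hw]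
  have : w ^ (M + M) = 1 := by exact_mod_cast hwN
  simp [this]

/-- Discrete orthogonality of the modes. -/
theorem dft_mode {N : ℤ} (hN : 2 ≤ N) (hE : Even N) {m k : ℤ} (hm : m ∈ idxs N)
    (hk : k ∈ idxs N) :
    dft N (fun j => Complex.exp (Complex.I * (m : ℂ) * (gridPt N j : ℂ))) k =
      if k = m then 1 else 0 := by
  have hN0 : (N : ℂ) ≠ 0 := by
    have : N ≠ 0 := by omega
    exact_mod_cast this
  have hterm : ∀ j : ℤ, Complex.exp (Complex.I * (m : ℂ) * (gridPt N j : ℂ)) *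
      Complex.exp (-(Complex.I * (k : ℂ) * (gridPt N j : ℂ))) =
      Complex.exp (Complex.I * ((m - k : ℤ) : ℂ) * (hgrid N : ℂ)) ^ j := by
    intro j
    rw [← Complex.exp_add, ← Complex.exp_int_mul]
    congr 1
    simp only [gridPt]
    push_cast
    ring
  simp only [dft, hterm]
  split_ifs with h
  · subst h
    have hcard : ((idxs N).card : ℂ) = N := by
      obtain ⟨M, rfl⟩ := hE
      have : ((idxs (M + M)).card : ℤ) = M + M := by
        simp only [idxs, Int.card_Icc]
        omega
      exact_mod_cast this
    simp [hcard, hN0]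
  · have hpi : (Real.pi : ℂ) ≠ 0 := by exact_mod_cast Real.pi_ne_zero
    rw [sum_idxs_pow hN hE, mul_zero]
    · rw [Ne, Complex.exp_eq_one_iff]
      rintro ⟨n, hn⟩
      have hn' : ((m - k : ℤ) : ℂ) = (n * N : ℤ) := by
        simp only [hgrid] at hn
        push_cast at hn ⊢
        field_simp at hn
        linear_combination hn
      have hn'' : m - k = n * N := by exact_mod_cast hn'
      simp only [idxs, Finset.mem_Icc] at hm hk
      have hlt : |n * N| < 1 * N := by
        rw [← hn'', abs_lt]
        omega
      rw [abs_mul, abs_of_pos (show 0 < N by omega)] at hlt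
      have := Int.abs_lt_one_iff.1 (lt_of_mul_lt_mul_right hlt (by omega))
      subst this
      omega
    · rw [← Complex.exp_int_mul, Complex.exp_eq_one_iff]
      refine ⟨m - k, ?_⟩
      simp only [hgrid]
      push_cast
      field_simp

/-- The symbol of the antiderivative. -/
def antiderivSymbol (k : ℤ) : ℂ := if k = 0 then 0 else (Complex.I * (k : ℂ))⁻¹

theorem norm_antiderivSymbol_le_one (k : ℤ) : ‖antiderivSymbol k‖ ≤ 1 := by
  unfold antiderivSymbol
  split_ifs with h
  · simp
  · have : (1 : ℝ) ≤ |(k : ℝ)| := by exact_mod_cast Int.one_le_abs h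
    simpa using inv_le_one_of_one_le₀ this

theorem norm_antiderivSymbol_mul_exp_le_one (k : ℤ) (x : ℝ) :
    ‖antiderivSymbol k * Complex.exp (Complex.I * (k : ℂ) * (x : ℂ))‖ ≤ 1 := by
  rw [norm_mul, show Complex.I * (k : ℂ) * (x : ℂ) = ((k * x : ℝ) : ℂ) * Complex.I by
    push_cast; ring, Complex.norm_exp_ofReal_mul_I, mul_one]
  exact norm_antiderivSymbol_le_one k

theorem Shinv_eq_sum (N : ℤ) (g : ℤ → ℂ) (j : ℤ) :
    Shinv N g j = ∑ k ∈ idxs N, dft N g k *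
      (antiderivSymbol k * Complex.exp (Complex.I * (k : ℂ) * (gridPt N j : ℂ))) := by
  simp only [Shinv, idft, antiderivSymbol]
  refine Finset.sum_congr rfl fun k _ => ?_
  split_ifs <;> ring

theorem Shinv_mode {N : ℤ} (hN : 2 ≤ N) (hE : Even N) {m : ℤ} (hm : m ∈ idxs N) (j : ℤ) :
    Shinv N (fun i => Complex.exp (Complex.I * (m : ℂ) * (gridPt N i : ℂ))) j =
      antiderivSymbol m * Complex.exp (Complex.I * (m : ℂ) * (gridPt N j : ℂ)) := by
  rw [Shinv_eq_sum, Finset.sum_eq_single_of_mem m hm]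
  · simp [dft_mode hN hE hm hm]
  · intro k hk hkm
    simp [dft_mode hN hE hm hk, hkm]

theorem exists_mem_idxs_add_mul {N : ℤ} (hN : 2 ≤ N) (hE : Even N) (m : ℤ) :
    ∃ r ∈ idxs N, ∃ q : ℤ, m = r + q * N := by
  obtain ⟨M, rfl⟩ := hE
  refine ⟨(m + M - 1) % (M + M) - M + 1, ?_, (m + M - 1) / (M + M), ?_⟩
  · have h1 := Int.emod_nonneg (m + M - 1) (show M + M ≠ 0 by omega)
    have h2 := Int.emod_lt_of_pos (m + M - 1) (show 0 < M + M by omega)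
    simp only [idxs, Finset.mem_Icc]
    omega
  · have := Int.emod_add_mul_ediv (m + M - 1) (M + M)
    linarith [mul_comm (M + M) ((m + M - 1) / (M + M))]

/-- The pseudo-spectral antiderivative is bounded by one on every mode. -/
theorem norm_Shinv_mode_le_one {N : ℤ} (hN : 2 ≤ N) (hE : Even N) (m j : ℤ) :
    ‖Shinv N (fun i => Complex.exp (Complex.I * (m : ℂ) * (gridPt N i : ℂ))) j‖ ≤ 1 := by
  obtain ⟨r, hr, q, rfl⟩ := exists_mem_idxs_add_mul hN hE m
  simp_rw [exp_gridPt_add_mul (show N ≠ 0 by omega)]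
  rw [Shinv_mode hN hE hr]
  exact norm_antiderivSymbol_mul_exp_le_one r _

/-- `Shinv` commutes with pointwise convergent series. -/
theorem hasSum_Shinv {N : ℤ} {e : ℤ → ℤ → ℂ} {a : ℤ → ℂ} {g : ℤ → ℂ}
    (h : ∀ i, HasSum (fun m => a m * e m i) (g i)) (j : ℤ) :
    HasSum (fun m => a m * Shinv N (e m) j) (Shinv N g j) := by
  have hdft : ∀ k, HasSum (fun m => a m * dft N (e m) k) (dft N g k) := by
    intro k
    have := (hasSum_sum fun i (_ : i ∈ idxs N) => (h i).mul_right
      (Complex.exp (-(Complex.I * (k : ℂ) * (gridPt N i : ℂ))))).mul_left (N : ℂ)⁻¹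
    refine this.congr_fun fun m => ?_
    simp only [dft, Finset.mul_sum]
    exact Finset.sum_congr rfl fun i _ => by ring
  simp only [Shinv_eq_sum, Finset.mul_sum, ← mul_assoc (a _)]
  exact hasSum_sum fun k _ => (hdft k).mul_right _

/-! ### The error estimate -/

/-- The error of the pseudo-spectral antiderivative on the mode of frequency `m`. -/
def modeError (N j m : ℤ) : ℂ :=
  antiderivSymbol m * Complex.exp (Complex.I * (m : ℂ) * (gridPt N j : ℂ)) -
    Shinv N (fun i => Complex.exp (Complex.I * (m : ℂ) * (gridPt N i : ℂ))) j

theorem modeError_of_mem {N : ℤ} (hN : 2 ≤ N) (hE : Even N) (j : ℤ) {m : ℤ}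
    (hm : m ∈ idxs N) : modeError N j m = 0 := by
  rw [modeError, Shinv_mode hN hE hm, sub_self]

theorem norm_modeError_le_two {N : ℤ} (hN : 2 ≤ N) (hE : Even N) (j m : ℤ) :
    ‖modeError N j m‖ ≤ 2 :=
  (norm_sub_le _ _).trans <| by
    linarith [norm_antiderivSymbol_mul_exp_le_one m (gridPt N j),
      norm_Shinv_mode_le_one hN hE m j]

theorem hasSum_contAntideriv {f : ℝ → ℂ} (hper : Function.Periodic f (2 * Real.pi))
    (hf : ContDiff ℝ 1 f) (x : ℝ) :
    HasSum (fun k : ℤ => fourierCoeffP f k *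
      (antiderivSymbol k * Complex.exp (Complex.I * (k : ℂ) * (x : ℂ))))
      (contAntideriv f x) := by
  have hsum : Summable fun k : ℤ => fourierCoeffP f k *
      (antiderivSymbol k * Complex.exp (Complex.I * (k : ℂ) * (x : ℂ))) :=
    Summable.of_norm_bounded (summable_fourierCoeffP hper hf).norm fun k => by
      rw [norm_mul]
      exact mul_le_of_le_one_right (norm_nonneg _) (norm_antiderivSymbol_mul_exp_le_one k x)
  convert hsum.hasSum using 1
  rw [contAntideriv]
  refine tsum_congr fun k => ?_
  simp only [antiderivSymbol]
  split_ifs <;> ring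

theorem hasSum_antiderivative_error {f : ℝ → ℂ} (hper : Function.Periodic f (2 * Real.pi))
    (hf : ContDiff ℝ 1 f) (N j : ℤ) :
    HasSum (fun m => fourierCoeffP f m * modeError N j m)
      (contAntideriv f (gridPt N j) - Shinv N (samples N f) j) := by
  simp only [modeError, mul_sub]
  exact (hasSum_contAntideriv hper hf _).sub
    (hasSum_Shinv (fun i => hasSum_fourierCoeffP hper hf (gridPt N i)) j)

theorem sum_inv_sq_le_of_le_natAbs {M : ℕ} (hM : 1 ≤ M) (F : Finset ℤ)
    (hF : ∀ m ∈ F, M ≤ m.natAbs) : ∑ m ∈ F, ((m : ℝ) ^ 2)⁻¹ ≤ 4 / M := by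
  set n := F.sup Int.natAbs + 1
  have hsub : F ⊆ (Finset.Ioo (M - 1) n).image (fun i : ℕ => (i : ℤ)) ∪
      (Finset.Ioo (M - 1) n).image (fun i : ℕ => -(i : ℤ)) := by
    intro m hm
    have h1 := hF m hm
    have h2 : m.natAbs ≤ F.sup Int.natAbs := Finset.le_sup hm
    simp only [Finset.mem_union, Finset.mem_image, Finset.mem_Ioo]
    rcases le_total 0 m with h | h
    · exact Or.inl ⟨m.natAbs, by omega, by omega⟩
    · exact Or.inr ⟨m.natAbs, by omega, by omega⟩
  have hbound : ∑ i ∈ Finset.Ioo (M - 1) n, ((i : ℝ) ^ 2)⁻¹ ≤ 2 / M := by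
    have := sum_Ioo_inv_sq_le (α := ℝ) (M - 1) n
    rwa [Nat.cast_sub hM, Nat.cast_one, sub_add_cancel] at this
  calc ∑ m ∈ F, ((m : ℝ) ^ 2)⁻¹
      ≤ ∑ m ∈ (Finset.Ioo (M - 1) n).image (fun i : ℕ => (i : ℤ)) ∪
          (Finset.Ioo (M - 1) n).image (fun i : ℕ => -(i : ℤ)), ((m : ℝ) ^ 2)⁻¹ :=
        Finset.sum_le_sum_of_subset_of_nonneg hsub fun _ _ _ => by positivity
    _ ≤ ∑ m ∈ (Finset.Ioo (M - 1) n).image (fun i : ℕ => (i : ℤ)), ((m : ℝ) ^ 2)⁻¹ +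
          ∑ m ∈ (Finset.Ioo (M - 1) n).image (fun i : ℕ => -(i : ℤ)), ((m : ℝ) ^ 2)⁻¹ := by
        rw [← Finset.sum_union_inter]
        exact le_add_of_nonneg_right (Finset.sum_nonneg fun _ _ => by positivity)
    _ = ∑ i ∈ Finset.Ioo (M - 1) n, ((i : ℝ) ^ 2)⁻¹ +
          ∑ i ∈ Finset.Ioo (M - 1) n, ((i : ℝ) ^ 2)⁻¹ := by
        rw [Finset.sum_image (by intro a _ b _ h; simpa using h),
          Finset.sum_image (by intro a _ b _ h; simpa using h)]
        simp
    _ ≤ 4 / M := by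
        have : (4 : ℝ) / M = 2 / M + 2 / M := by ring
        linarith

theorem sum_inv_weight_le {s : ℕ} (hs : 1 ≤ s) {M : ℕ} (hM : 1 ≤ M) (F : Finset ℤ)
    (hF : ∀ m ∈ F, M ≤ m.natAbs) :
    ∑ m ∈ F, ((1 + (m : ℝ) ^ 2) ^ s)⁻¹ ≤ 4 * ((M : ℝ) ^ (2 * s - 1))⁻¹ := by
  obtain ⟨t, rfl⟩ := Nat.exists_eq_add_of_le' hs
  have hM0 : (0 : ℝ) < M := by exact_mod_cast hM
  calc ∑ m ∈ F, ((1 + (m : ℝ) ^ 2) ^ (t + 1))⁻¹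
      ≤ ∑ m ∈ F, ((M : ℝ) ^ (2 * t))⁻¹ * ((m : ℝ) ^ 2)⁻¹ := by
        refine Finset.sum_le_sum fun m hm => ?_
        have hMm : (M : ℝ) ≤ |(m : ℝ)| := by
          rw [← Int.cast_abs, Int.abs_eq_natAbs]
          exact_mod_cast hF m hm
        have hsq : (M : ℝ) ^ 2 ≤ (m : ℝ) ^ 2 := by
          rw [← sq_abs (m : ℝ)]
          gcongr
        have hm0 : 0 < (m : ℝ) ^ 2 := lt_of_lt_of_le (by positivity) hsq
        rw [← mul_inv, pow_succ, pow_mul]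
        gcongr <;> linarith
    _ ≤ ((M : ℝ) ^ (2 * t))⁻¹ * (4 / M) := by
        rw [← Finset.mul_sum]
        gcongr
        exact sum_inv_sq_le_of_le_natAbs hM F hF
    _ = 4 * ((M : ℝ) ^ (2 * (t + 1) - 1))⁻¹ := by
        rw [show 2 * (t + 1) - 1 = 2 * t + 1 by omega, pow_succ]
        field_simp

theorem sum_norm_fourierCoeffP_le {s : ℕ} (hs : 1 ≤ s) {f : ℝ → ℂ}
    (hper : Function.Periodic f (2 * Real.pi)) (hf : ContDiff ℝ s f) {M : ℕ} (hM : 1 ≤ M)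
    (F : Finset ℤ) (hF : ∀ m ∈ F, M ≤ m.natAbs) :
    ∑ m ∈ F, ‖fourierCoeffP f m‖ ≤
      2 * Real.sqrt (((M : ℝ) ^ (2 * s - 1))⁻¹) * sobolevNorm s f := by
  have hsplit : ∀ m : ℤ, ‖fourierCoeffP f m‖ =
      Real.sqrt (((1 + (m : ℝ) ^ 2) ^ s)⁻¹) *
        Real.sqrt ((1 + (m : ℝ) ^ 2) ^ s * ‖fourierCoeffP f m‖ ^ 2) := by
    intro m
    have : (1 + (m : ℝ) ^ 2) ^ s ≠ 0 := by positivity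
    rw [← Real.sqrt_mul (by positivity), inv_mul_cancel_left₀ this,
      Real.sqrt_sq (norm_nonneg _)]
  calc ∑ m ∈ F, ‖fourierCoeffP f m‖
      = ∑ m ∈ F, Real.sqrt (((1 + (m : ℝ) ^ 2) ^ s)⁻¹) *
        Real.sqrt ((1 + (m : ℝ) ^ 2) ^ s * ‖fourierCoeffP f m‖ ^ 2) :=
        Finset.sum_congr rfl fun m _ => hsplit m
    _ ≤ Real.sqrt (∑ m ∈ F, ((1 + (m : ℝ) ^ 2) ^ s)⁻¹) *
          Real.sqrt (∑ m ∈ F, (1 + (m : ℝ) ^ 2) ^ s * ‖fourierCoeffP f m‖ ^ 2) :=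
        Real.sum_sqrt_mul_sqrt_le F (fun _ => by positivity) fun _ => by positivity
    _ ≤ Real.sqrt (2 ^ 2 * ((M : ℝ) ^ (2 * s - 1))⁻¹) * sobolevNorm s f := by
        unfold sobolevNorm
        gcongr
        · exact (sum_inv_weight_le hs hM F hF).trans_eq (by norm_num)
        · exact (summable_sobolev hper hf).sum_le_tsum F fun _ _ => by positivity
    _ = _ := by
        rw [Real.sqrt_mul (by positivity), Real.sqrt_sq (by norm_num)]

theorem sqrt_inv_pow_le_hgrid_rpow {s : ℕ} (hs : 1 ≤ s) {M : ℕ} (hM : 1 ≤ M) :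
    Real.sqrt (((M : ℝ) ^ (2 * s - 1))⁻¹) ≤ hgrid (M + M) ^ ((s : ℝ) - 1 / 2) := by
  have hM0 : (0 : ℝ) < M := by exact_mod_cast hM
  have hexp : (0 : ℝ) ≤ (s : ℝ) - 1 / 2 := by
    have : (1 : ℝ) ≤ s := by exact_mod_cast hs
    linarith
  have hle : (M : ℝ)⁻¹ ≤ hgrid (M + M) := by
    have : hgrid (M + M) = Real.pi * (M : ℝ)⁻¹ := by
      simp only [hgrid]
      push_cast
      field_simp
      ring
    rw [this]
    exact le_mul_of_one_le_left (by positivity) (by linarith [Real.pi_gt_three])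
  calc Real.sqrt (((M : ℝ) ^ (2 * s - 1))⁻¹) = ((M : ℝ)⁻¹) ^ ((s : ℝ) - 1 / 2) := by
        rw [← inv_pow, Real.sqrt_eq_rpow, ← Real.rpow_natCast, ← Real.rpow_mul (by positivity),
          Nat.cast_sub (by omega)]
        congr 1
        push_cast
        ring
    _ ≤ _ := Real.rpow_le_rpow (by positivity) hle hexp

/-- Lemma 5.2: spectral accuracy of the pseudo-spectral antiderivative. -/
theorem pseudospectral_antiderivative_accuracy (s : ℕ) (hs : 1 ≤ s) :
    ∃ c : ℝ, 0 < c ∧ ∀ f : ℝ → ℂ, Function.Periodic f (2 * Real.pi) →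
      ContDiff ℝ (s : ℕ) f → (∫ α in (-Real.pi)..Real.pi, f α) = 0 →
      ∀ N : ℤ, 2 ≤ N → Even N → ∀ j ∈ idxs N,
        ‖contAntideriv f (gridPt N j) - Shinv N (samples N f) j‖ ≤
          c * hgrid N ^ ((s : ℝ) - 1 / 2) * sobolevNorm s f := by
  refine ⟨4, by norm_num, fun f hper hf _ N hN hE j _ => ?_⟩
  have hsum := hasSum_antiderivative_error hper (hf.of_le (by exact_mod_cast hs)) N j
  refine le_of_tendsto hsum.norm (Filter.Eventually.of_forall fun F => ?_)
  obtain ⟨M, rfl⟩ := id hE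
  lift M to ℕ using by omega
  have hM : 1 ≤ M := by omega
  have hF : ∀ m ∈ F \ idxs (M + M), M ≤ m.natAbs := by
    intro m hm
    simp only [Finset.mem_sdiff, idxs, Finset.mem_Icc] at hm
    omega
  have hnonneg : 0 ≤ sobolevNorm s f := Real.sqrt_nonneg _
  calc ‖∑ m ∈ F, fourierCoeffP f m * modeError (M + M) j m‖
      = ‖∑ m ∈ F \ idxs (M + M), fourierCoeffP f m * modeError (M + M) j m‖ := by
        congr 1
        refine (Finset.sum_subset Finset.sdiff_subset fun m hmF hm => ?_).symm
        rw [modeError_of_mem hN hE j (by simpa [hmF] using hm), mul_zero]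
    _ ≤ ∑ m ∈ F \ idxs (M + M), ‖fourierCoeffP f m‖ * 2 := by
        refine norm_sum_le_of_le _ fun m _ => ?_
        rw [norm_mul]
        gcongr
        exact norm_modeError_le_two hN hE j m
    _ ≤ 2 * Real.sqrt (((M : ℝ) ^ (2 * s - 1))⁻¹) * sobolevNorm s f * 2 := by
        rw [← Finset.sum_mul]
        gcongr
        exact sum_norm_fourierCoeffP_le hs hper hf hM _ hF
    _ ≤ 2 * hgrid (M + M) ^ ((s : ℝ) - 1 / 2) * sobolevNorm s f * 2 := by
        gcongr
        exact sqrt_inv_pow_le_hgrid_rpow hs hM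
    _ = 4 * hgrid (M + M) ^ ((s : ℝ) - 1 / 2) * sobolevNorm s f := by ring

end
end

section
/- Let f : ℝ² → ℂ be 2π-periodic in each variable and of class C⁴, and let ρ be a filter function. For a discrete function φ define R_h(φ)_i = 2h Σ_{j=−N/2+1, (j−i) odd}^{N/2} f(α_i, α_j) φ_j. Then there exists a constant c > 0, depending only on f and ρ and not on N or φ, such that for every even integer N ≥ 2, every discrete function φ, and every k ∈ {0, 1, 2}: ‖D_h^k(R_h(φ^p))‖_{l²} ≤ c ‖φ‖_{l²} and ‖R_h((S_h^k φ)^p)‖_{l²} ≤ c ‖φ‖_{l²}. -/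
open scoped BigOperators
open Finset

noncomputable section

/-- The discrete operator `R_h` with smooth kernel `f`, using the alternate-point
trapezoidal rule. -/
def Rh (N : ℤ) (f : ℝ × ℝ → ℂ) (φ : ℤ → ℂ) (i : ℤ) : ℂ :=
  2 * (hgrid N : ℂ) * ∑ j ∈ (idxs N).filter (fun j => Odd (j - i)),
    f (gridPt N i, gridPt N j) * φ j

/-- The grid exponential `e^{i m α_j}`. -/
def gridExp (N m j : ℤ) : ℂ := Complex.exp (Complex.I * (m : ℂ) * (gridPt N j : ℂ))

/-- The central difference quotient of a discrete function. -/
def ctrDiff (h : ℝ) (g : ℤ → ℂ) (n : ℤ) : ℂ := (2 * (h : ℂ))⁻¹ * (g (n + 1) - g (n - 1))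

/-- The central difference quotient in direction `v` of a function on the plane. -/
def dirDiff (h : ℝ) (v : ℝ × ℝ) (F : ℝ × ℝ → ℂ) (p : ℝ × ℝ) : ℂ :=
  (2 * (h : ℂ))⁻¹ * (F (p + h • v) - F (p - h • v))

section GridExp

theorem gridExp_add_right (N m j l : ℤ) :
    gridExp N m (j + l) = gridExp N m j * gridExp N m l := by
  unfold gridExp gridPt
  rw [← Complex.exp_add]
  push_cast
  ring_nf

theorem gridExp_comm (N m j : ℤ) : gridExp N m j = gridExp N j m := by
  unfold gridExp gridPt
  push_cast
  ring_nf

theorem gridExp_add_left (N m n j : ℤ) :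
    gridExp N (m + n) j = gridExp N m j * gridExp N n j := by
  rw [gridExp_comm, gridExp_add_right, gridExp_comm N j m, gridExp_comm N j n]

theorem gridExp_neg_left (N m j : ℤ) :
    gridExp N (-m) j = Complex.exp (-(Complex.I * (m : ℂ) * (gridPt N j : ℂ))) := by
  unfold gridExp
  push_cast
  ring_nf

theorem gridExp_neg_right (N m j : ℤ) : gridExp N m (-j) = gridExp N (-m) j := by
  unfold gridExp gridPt
  push_cast
  ring_nf

theorem conj_gridExp (N m j : ℤ) : (starRingEnd ℂ) (gridExp N m j) = gridExp N (-m) j := by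
  unfold gridExp
  rw [← Complex.exp_conj]
  simp

theorem gridExp_period {N : ℤ} (hN : 2 ≤ N) (m : ℤ) : gridExp N m N = 1 := by
  have hN0 : (N : ℂ) ≠ 0 := by exact_mod_cast (by omega : N ≠ 0)
  unfold gridExp gridPt hgrid
  rw [Complex.exp_eq_one_iff]
  refine ⟨m, ?_⟩
  push_cast
  field_simp

theorem gridExp_one_ne {N m : ℤ} (hN : 2 ≤ N) (hm : ¬ N ∣ m) : gridExp N m 1 ≠ 1 := by
  have hN0 : (N : ℂ) ≠ 0 := by exact_mod_cast (by omega : N ≠ 0)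
  have hpi : (Real.pi : ℂ) ≠ 0 := by exact_mod_cast Real.pi_ne_zero
  unfold gridExp gridPt hgrid
  rw [Ne, Complex.exp_eq_one_iff]
  rintro ⟨n, hn⟩
  apply hm
  refine ⟨n, ?_⟩
  push_cast at hn
  field_simp at hn
  have : (m : ℂ) = N * n := by linear_combination hn
  exact_mod_cast this

theorem sum_idxs_add_one {N : ℤ} (hN : 2 ≤ N) (he : Even N) {g : ℤ → ℂ}
    (hg : ∀ n, g (n + N) = g n) : ∑ j ∈ idxs N, g (j + 1) = ∑ j ∈ idxs N, g j := by
  obtain ⟨M, rfl⟩ := he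
  have h2 : (M + M) / 2 = M := by omega
  unfold idxs
  rw [h2]
  have hl : Finset.Icc (-M + 1) M = insert (-M + 1) (Finset.Icc (-M + 2) M) := by
    ext x; simp only [Finset.mem_Icc, Finset.mem_insert]; omega
  have hr : (Finset.Icc (-M + 1) M).image (· + 1) = insert (M + 1) (Finset.Icc (-M + 2) M) := by
    ext x
    simp only [Finset.mem_Icc, Finset.mem_insert, Finset.mem_image]
    constructor
    · rintro ⟨a, ha, rfl⟩; omega
    · intro h; exact ⟨x - 1, by omega, by omega⟩
  have hs : ∑ j ∈ Finset.Icc (-M + 1) M, g (j + 1)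
      = ∑ j ∈ (Finset.Icc (-M + 1) M).image (· + 1), g j := by
    rw [Finset.sum_image]
    intro a _ b _ h
    simpa using h
  rw [hs, hr, hl, Finset.sum_insert (by simp), Finset.sum_insert (by simp)]
  have := hg (-M + 1)
  rw [show -M + 1 + (M + M) = M + 1 by ring] at this
  rw [this]

theorem sum_idxs_sub_one {N : ℤ} (hN : 2 ≤ N) (he : Even N) {g : ℤ → ℂ}
    (hg : ∀ n, g (n + N) = g n) : ∑ j ∈ idxs N, g (j - 1) = ∑ j ∈ idxs N, g j := by
  have := sum_idxs_add_one hN he (g := fun n => g (n - 1)) (fun n => by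
    rw [show n + N - 1 = n - 1 + N by ring, hg])
  simpa using this.symm

theorem card_idxs {N : ℤ} (hN : 2 ≤ N) (he : Even N) : ((idxs N).card : ℤ) = N := by
  obtain ⟨M, rfl⟩ := he
  unfold idxs
  rw [Int.card_Icc]
  omega

theorem sum_gridExp {N : ℤ} (hN : 2 ≤ N) (he : Even N) (m : ℤ) :
    ∑ j ∈ idxs N, gridExp N m j = if N ∣ m then (N : ℂ) else 0 := by
  split_ifs with hm
  · obtain ⟨n, rfl⟩ := hm
    have h1 : ∀ j ∈ idxs N, gridExp N (N * n) j = 1 := by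
      intro j _
      have hN0 : (N : ℂ) ≠ 0 := by exact_mod_cast (by omega : N ≠ 0)
      unfold gridExp gridPt hgrid
      rw [Complex.exp_eq_one_iff]
      refine ⟨n * j, ?_⟩
      push_cast
      field_simp
    rw [Finset.sum_congr rfl h1, Finset.sum_const, nsmul_eq_mul, mul_one]
    exact_mod_cast card_idxs hN he
  · have h := sum_idxs_add_one hN he (g := gridExp N m)
      (fun n => by rw [gridExp_add_right, gridExp_period hN, mul_one])
    simp only [gridExp_add_right] at h
    rw [← Finset.sum_mul] at h
    have h1 := gridExp_one_ne hN hm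
    have : (∑ j ∈ idxs N, gridExp N m j) * (gridExp N m 1 - 1) = 0 := by
      rw [mul_sub, h]; ring
    rcases mul_eq_zero.1 this with h0 | h0
    · exact h0
    · exact absurd (sub_eq_zero.1 h0) h1

theorem sum_gridExp_sub {N : ℤ} (hN : 2 ≤ N) (he : Even N) {k l : ℤ}
    (hk : k ∈ idxs N) (hl : l ∈ idxs N) :
    ∑ j ∈ idxs N, gridExp N (k - l) j = if k = l then (N : ℂ) else 0 := by
  rw [sum_gridExp hN he]
  congr 1
  rw [eq_iff_iff]
  constructor
  · rintro ⟨n, hn⟩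
    unfold idxs at hk hl
    rw [Finset.mem_Icc] at hk hl
    obtain ⟨M, rfl⟩ := he
    have h1 : (M + M) * n < (M + M) * 1 := by omega
    have h2 : (M + M) * (-1) < (M + M) * n := by omega
    have h3 := lt_of_mul_lt_mul_left h1 (by omega)
    have h4 := lt_of_mul_lt_mul_left h2 (by omega)
    obtain rfl : n = 0 := by omega
    simp at hn
    omega
  · rintro rfl; simp

end GridExp

section Fourier

theorem dft_eq (N : ℤ) (f : ℤ → ℂ) (k : ℤ) :
    dft N f k = (N : ℂ)⁻¹ * ∑ j ∈ idxs N, f j * gridExp N (-k) j := by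
  simp only [dft, gridExp_neg_left]

theorem idft_eq (N : ℤ) (c : ℤ → ℂ) (j : ℤ) :
    idft N c j = ∑ k ∈ idxs N, c k * gridExp N k j := rfl

theorem idft_congr {N : ℤ} {c d : ℤ → ℂ} (h : ∀ k ∈ idxs N, c k = d k) :
    idft N c = idft N d := by
  funext j
  simp only [idft_eq]
  exact Finset.sum_congr rfl fun k hk => by rw [h k hk]

theorem dft_idft {N : ℤ} (hN : 2 ≤ N) (he : Even N) (c : ℤ → ℂ) {k : ℤ} (hk : k ∈ idxs N) :
    dft N (idft N c) k = c k := by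
  have hN0 : (N : ℂ) ≠ 0 := by exact_mod_cast (by omega : N ≠ 0)
  simp only [dft_eq, idft_eq, Finset.sum_mul]
  rw [Finset.sum_comm]
  have : ∀ l ∈ idxs N, ∑ j ∈ idxs N, c l * gridExp N l j * gridExp N (-k) j
      = if l = k then c l * N else 0 := by
    intro l hl
    have h := sum_gridExp_sub hN he hl hk
    simp only [sub_eq_add_neg, gridExp_add_left] at h
    simp only [mul_assoc, ← Finset.mul_sum, h]
    split_ifs <;> simp
  rw [Finset.sum_congr rfl this, Finset.sum_ite_eq' (idxs N) k, if_pos hk]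
  field_simp

theorem idft_dft {N : ℤ} (hN : 2 ≤ N) (he : Even N) (f : ℤ → ℂ) {j : ℤ} (hj : j ∈ idxs N) :
    idft N (dft N f) j = f j := by
  have hN0 : (N : ℂ) ≠ 0 := by exact_mod_cast (by omega : N ≠ 0)
  simp only [dft_eq, idft_eq, Finset.mul_sum, Finset.sum_mul]
  rw [Finset.sum_comm]
  have : ∀ l ∈ idxs N, ∑ k ∈ idxs N, (N : ℂ)⁻¹ * (f l * gridExp N (-k) l) * gridExp N k j
      = if j = l then f l else 0 := by
    intro l hl
    have h := sum_gridExp_sub hN he hj hl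
    have h' : ∀ k, (N : ℂ)⁻¹ * (f l * gridExp N (-k) l) * gridExp N k j
        = (N : ℂ)⁻¹ * f l * gridExp N (j - l) k := by
      intro k
      rw [gridExp_comm N (j - l) k, sub_eq_add_neg, gridExp_add_right, gridExp_neg_right]
      ring
    simp only [h', ← Finset.mul_sum, h]
    split_ifs
    · field_simp
    · simp
  rw [Finset.sum_congr rfl this, Finset.sum_ite_eq (idxs N) j, if_pos hj]

theorem sum_norm_sq_idft {N : ℤ} (hN : 2 ≤ N) (he : Even N) (c : ℤ → ℂ) :
    ∑ j ∈ idxs N, ‖idft N c j‖ ^ 2 = N * ∑ k ∈ idxs N, ‖c k‖ ^ 2 := by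
  have key : ∑ j ∈ idxs N, idft N c j * (starRingEnd ℂ) (idft N c j)
      = N * ∑ k ∈ idxs N, c k * (starRingEnd ℂ) (c k) := by
    simp only [idft_eq, map_sum, map_mul, conj_gridExp, Finset.sum_mul_sum]
    rw [Finset.sum_comm, Finset.mul_sum]
    refine Finset.sum_congr rfl fun k hk => ?_
    rw [Finset.sum_comm]
    have : ∀ l ∈ idxs N, ∑ j ∈ idxs N,
        c k * gridExp N k j * ((starRingEnd ℂ) (c l) * gridExp N (-l) j)
        = if k = l then N * (c k * (starRingEnd ℂ) (c l)) else 0 := by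
      intro l hl
      have h := sum_gridExp_sub hN he hk hl
      have h' : ∀ j, c k * gridExp N k j * ((starRingEnd ℂ) (c l) * gridExp N (-l) j)
          = c k * (starRingEnd ℂ) (c l) * gridExp N (k - l) j := by
        intro j
        rw [sub_eq_add_neg, gridExp_add_left]
        ring
      simp only [h', ← Finset.mul_sum, h]
      split_ifs
      · ring
      · simp
    rw [Finset.sum_congr rfl this, Finset.sum_ite_eq (idxs N) k, if_pos hk]
  simp only [Complex.mul_conj'] at key
  exact_mod_cast key

theorem sum_norm_sq_eq_dft {N : ℤ} (hN : 2 ≤ N) (he : Even N) (f : ℤ → ℂ) :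
    ∑ j ∈ idxs N, ‖f j‖ ^ 2 = N * ∑ k ∈ idxs N, ‖dft N f k‖ ^ 2 := by
  rw [← sum_norm_sq_idft hN he]
  exact Finset.sum_congr rfl fun j hj => by rw [idft_dft hN he f hj]

theorem hgrid_pos {N : ℤ} (hN : 2 ≤ N) : 0 < hgrid N := by
  have : (0 : ℝ) < N := by exact_mod_cast (by omega : 0 < N)
  unfold hgrid
  positivity

theorem l2norm_le_of_dft_le {N : ℤ} (hN : 2 ≤ N) (he : Even N) {f g : ℤ → ℂ} {C : ℝ}
    (hC : 0 ≤ C) (h : ∀ k ∈ idxs N, ‖dft N f k‖ ≤ C * ‖dft N g k‖) :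
    l2norm N f ≤ C * l2norm N g := by
  have hN0 : (0 : ℝ) < N := by exact_mod_cast (by omega : 0 < N)
  have hh := hgrid_pos hN
  unfold l2norm
  rw [← Real.sqrt_sq hC, ← Real.sqrt_mul (sq_nonneg C), sum_norm_sq_eq_dft hN he f,
    sum_norm_sq_eq_dft hN he g]
  apply Real.sqrt_le_sqrt
  have : ∑ k ∈ idxs N, ‖dft N f k‖ ^ 2 ≤ C ^ 2 * ∑ k ∈ idxs N, ‖dft N g k‖ ^ 2 := by
    rw [Finset.mul_sum]
    refine Finset.sum_le_sum fun k hk => ?_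
    rw [← mul_pow]
    exact pow_le_pow_left₀ (norm_nonneg _) (h k hk) 2
  calc hgrid N * (N * ∑ k ∈ idxs N, ‖dft N f k‖ ^ 2)
      ≤ hgrid N * (N * (C ^ 2 * ∑ k ∈ idxs N, ‖dft N g k‖ ^ 2)) := by gcongr
    _ = _ := by ring

theorem l2norm_le_of_kernel_bound {N : ℤ} (hN : 2 ≤ N) (he : Even N) {u ψ : ℤ → ℂ} {A : ℝ}
    (hA : 0 ≤ A) (h : ∀ i ∈ idxs N, ‖u i‖ ≤ A * (hgrid N * ∑ j ∈ idxs N, ‖ψ j‖)) :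
    l2norm N u ≤ 2 * Real.pi * A * l2norm N ψ := by
  have hN0 : (0 : ℝ) < N := by exact_mod_cast (by omega : 0 < N)
  have hh := hgrid_pos hN
  have hcard : ((idxs N).card : ℝ) = N := by exact_mod_cast card_idxs hN he
  have hhN : hgrid N * N = 2 * Real.pi := by unfold hgrid; field_simp
  have hpi := Real.pi_pos
  have hcs : (∑ j ∈ idxs N, ‖ψ j‖) ^ 2 ≤ N * ∑ j ∈ idxs N, ‖ψ j‖ ^ 2 := by
    rw [← hcard]; exact sq_sum_le_card_mul_sum_sq
  unfold l2norm
  rw [← Real.sqrt_sq (by positivity : 0 ≤ 2 * Real.pi * A), ← Real.sqrt_mul (sq_nonneg _)]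
  apply Real.sqrt_le_sqrt
  have hu : ∑ i ∈ idxs N, ‖u i‖ ^ 2 ≤ N * (A * (hgrid N * ∑ j ∈ idxs N, ‖ψ j‖)) ^ 2 := by
    rw [← hcard, ← nsmul_eq_mul]
    exact Finset.sum_le_card_nsmul _ _ _
      fun i hi => pow_le_pow_left₀ (norm_nonneg _) (h i hi) 2
  calc hgrid N * ∑ i ∈ idxs N, ‖u i‖ ^ 2
      ≤ hgrid N * (N * (A * (hgrid N * ∑ j ∈ idxs N, ‖ψ j‖)) ^ 2) := by gcongr
    _ = (hgrid N * N) * A ^ 2 * hgrid N ^ 2 * (∑ j ∈ idxs N, ‖ψ j‖) ^ 2 := by ring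
    _ ≤ (hgrid N * N) * A ^ 2 * hgrid N ^ 2 * (N * ∑ j ∈ idxs N, ‖ψ j‖ ^ 2) := by gcongr
    _ = (hgrid N * N) ^ 2 * A ^ 2 * (hgrid N * ∑ j ∈ idxs N, ‖ψ j‖ ^ 2) := by ring
    _ = _ := by rw [hhN]; ring

end Fourier

section Differences

theorem ctrDiff_iterate_periodic {N : ℤ} {g : ℤ → ℂ} (h : ℝ) (hg : ∀ n, g (n + N) = g n)
    (k : ℕ) : ∀ n, (ctrDiff h)^[k] g (n + N) = (ctrDiff h)^[k] g n := by
  induction k with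
  | zero => exact hg
  | succ k ih =>
    intro n
    rw [Function.iterate_succ_apply']
    simp only [ctrDiff]
    rw [← ih (n + 1), ← ih (n - 1)]
    ring_nf

theorem gridExp_one_sub (N m : ℤ) :
    (2 * (hgrid N : ℂ))⁻¹ * (gridExp N m 1 - gridExp N m (-1))
      = Complex.I * ((Real.sin (gridPt N m) / hgrid N : ℝ) : ℂ) := by
  have h1 : gridExp N m 1 = Complex.exp ((gridPt N m : ℂ) * Complex.I) := by
    unfold gridExp gridPt; push_cast; ring_nf
  have h2 : gridExp N m (-1) = Complex.exp (-(gridPt N m : ℂ) * Complex.I) := by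
    unfold gridExp gridPt; push_cast; ring_nf
  rw [h1, h2]
  push_cast
  rw [Complex.sin]
  linear_combination (-(1 / 2) * (Complex.exp (-(gridPt N m : ℂ) * Complex.I)
    - Complex.exp ((gridPt N m : ℂ) * Complex.I)) * (hgrid N : ℂ)⁻¹) * Complex.I_sq

/-- The Fourier symbol of the central difference quotient. -/
def ctrSymbol (N m : ℤ) : ℂ := Complex.I * ((Real.sin (gridPt N m) / hgrid N : ℝ) : ℂ)

theorem dft_ctrDiff {N : ℤ} (hN : 2 ≤ N) (he : Even N) {g : ℤ → ℂ}
    (hg : ∀ n, g (n + N) = g n) (m : ℤ) :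
    dft N (ctrDiff (hgrid N) g) m = ctrSymbol N m * dft N g m := by
  have hper : ∀ n, g (n + N) * gridExp N (-m) (n + N) = g n * gridExp N (-m) n := by
    intro n
    rw [hg, gridExp_add_right, gridExp_period hN, mul_one]
  have h1 := sum_idxs_add_one hN he (g := fun n => g n * gridExp N (-m) n) hper
  have h2 := sum_idxs_sub_one hN he (g := fun n => g n * gridExp N (-m) n) hper
  have e1 : ∀ j, g (j + 1) * gridExp N (-m) j
      = g (j + 1) * gridExp N (-m) (j + 1) * gridExp N m 1 := by
    intro j
    rw [mul_assoc, ← gridExp_neg_right N m (j + 1), ← gridExp_add_right, ← gridExp_neg_right]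
    congr 2; ring
  have e2 : ∀ j, g (j - 1) * gridExp N (-m) j
      = g (j - 1) * gridExp N (-m) (j - 1) * gridExp N m (-1) := by
    intro j
    rw [mul_assoc, ← gridExp_neg_right N m (j - 1), ← gridExp_add_right, ← gridExp_neg_right]
    congr 2; ring
  rw [ctrSymbol, ← gridExp_one_sub, dft_eq, dft_eq]
  simp only [ctrDiff, mul_assoc, ← Finset.mul_sum, sub_mul, Finset.sum_sub_distrib]
  simp only [e1, e2, ← Finset.sum_mul]
  rw [h1, h2]
  ring

theorem dft_ctrDiff_iterate {N : ℤ} (hN : 2 ≤ N) (he : Even N) {g : ℤ → ℂ}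
    (hg : ∀ n, g (n + N) = g n) (m : ℤ) (k : ℕ) :
    dft N ((ctrDiff (hgrid N))^[k] g) m = ctrSymbol N m ^ k * dft N g m := by
  induction k with
  | zero => simp
  | succ k ih =>
    rw [Function.iterate_succ_apply',
      dft_ctrDiff hN he (ctrDiff_iterate_periodic (hgrid N) hg k), ih]
    ring

theorem ctrDiff_idft (N : ℤ) (c : ℤ → ℂ) :
    ctrDiff (hgrid N) (idft N c) = idft N (fun m => ctrSymbol N m * c m) := by
  funext j
  simp only [ctrDiff, idft_eq, ← Finset.sum_sub_distrib, Finset.mul_sum]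
  refine Finset.sum_congr rfl fun m _ => ?_
  rw [ctrSymbol, ← gridExp_one_sub, sub_eq_add_neg j, gridExp_add_right, gridExp_add_right]
  ring

theorem ctrDiff_iterate_idft (N : ℤ) (c : ℤ → ℂ) (k : ℕ) :
    (ctrDiff (hgrid N))^[k] (idft N c) = idft N (fun m => ctrSymbol N m ^ k * c m) := by
  induction k with
  | zero => simp
  | succ k ih =>
    rw [Function.iterate_succ_apply', ih, ctrDiff_idft]
    simp only [pow_succ', mul_assoc]

theorem idft_periodic {N : ℤ} (hN : 2 ≤ N) (c : ℤ → ℂ) (n : ℤ) :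
    idft N c (n + N) = idft N c n := by
  simp only [idft_eq, gridExp_add_right, gridExp_period hN, mul_one]

theorem ctrDiff_iterate_sum (h : ℝ) (s : Finset ℤ) (G : ℤ → ℤ → ℂ) (w : ℤ → ℂ) (k : ℕ) :
    (ctrDiff h)^[k] (fun i => ∑ j ∈ s, G j i * w j)
      = fun i => ∑ j ∈ s, (ctrDiff h)^[k] (G j) i * w j := by
  induction k with
  | zero => rfl
  | succ k ih =>
    simp only [Function.iterate_succ_apply', ih]
    funext i
    simp only [ctrDiff, ← Finset.sum_sub_distrib, Finset.mul_sum]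
    exact Finset.sum_congr rfl fun j _ => by ring

theorem sum_mul_ctrDiff {N : ℤ} (hN : 2 ≤ N) (he : Even N) (h : ℝ) {G w : ℤ → ℂ}
    (hG : ∀ n, G (n + N) = G n) (hw : ∀ n, w (n + N) = w n) :
    ∑ j ∈ idxs N, G j * ctrDiff h w j = -∑ j ∈ idxs N, ctrDiff h G j * w j := by
  have h1 := sum_idxs_add_one hN he (g := fun n => G (n - 1) * w n) (fun n => by
    rw [hw, show n + N - 1 = n - 1 + N by ring, hG])
  have h2 := sum_idxs_sub_one hN he (g := fun n => G (n + 1) * w n) (fun n => by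
    rw [hw, show n + N + 1 = n + 1 + N by ring, hG])
  simp only [add_sub_cancel_right, sub_add_cancel] at h1 h2
  have e1 : ∑ j ∈ idxs N, G j * ctrDiff h w j
      = (2 * (h : ℂ))⁻¹ * (∑ j ∈ idxs N, G j * w (j + 1) - ∑ j ∈ idxs N, G j * w (j - 1)) := by
    rw [← Finset.sum_sub_distrib, Finset.mul_sum]
    exact Finset.sum_congr rfl fun j _ => by simp only [ctrDiff]; ring
  have e2 : ∑ j ∈ idxs N, ctrDiff h G j * w j
      = (2 * (h : ℂ))⁻¹ * (∑ j ∈ idxs N, G (j + 1) * w j - ∑ j ∈ idxs N, G (j - 1) * w j) := by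
    rw [← Finset.sum_sub_distrib, Finset.mul_sum]
    exact Finset.sum_congr rfl fun j _ => by simp only [ctrDiff]; ring
  rw [e1, e2, h1, h2]
  ring

theorem norm_sum_mul_ctrDiff_iterate {N : ℤ} (hN : 2 ≤ N) (he : Even N) (h : ℝ) {w : ℤ → ℂ}
    (hw : ∀ n, w (n + N) = w n) (k : ℕ) {G : ℤ → ℂ} (hG : ∀ n, G (n + N) = G n) :
    ‖∑ j ∈ idxs N, G j * (ctrDiff h)^[k] w j‖
      = ‖∑ j ∈ idxs N, (ctrDiff h)^[k] G j * w j‖ := by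
  induction k generalizing G with
  | zero => rfl
  | succ k ih =>
    rw [Function.iterate_succ_apply', Function.iterate_succ_apply,
      sum_mul_ctrDiff hN he h hG (ctrDiff_iterate_periodic h hw k), norm_neg,
      ih (G := ctrDiff h G) (ctrDiff_iterate_periodic h hG 1)]

theorem ctrDiff_iterate_odd_lattice (h : ℝ) (v p : ℝ × ℝ) (a : ℤ) (F : ℝ × ℝ → ℂ) (k : ℕ) :
    (ctrDiff h)^[k] (fun n : ℤ => if Odd (n + a) then F (p + ((n : ℝ) * h) • v) else 0)
      = fun n : ℤ => if Odd (n + a + k) then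
          (dirDiff h v)^[k] F (p + ((n : ℝ) * h) • v) else 0 := by
  induction k with
  | zero => simp
  | succ k ih =>
    rw [Function.iterate_succ_apply', ih]
    funext n
    simp only [ctrDiff, Function.iterate_succ_apply']
    have i1 : Odd (n + 1 + a + (k : ℤ)) ↔ Odd (n + a + ((k + 1 : ℕ) : ℤ)) := by
      push_cast; rw [show n + 1 + a + (k : ℤ) = n + a + (k + 1) by ring]
    have i2 : Odd (n - 1 + a + (k : ℤ)) ↔ Odd (n + a + ((k + 1 : ℕ) : ℤ)) := by
      simp only [Int.odd_iff]; push_cast; omega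
    simp only [i1, i2]
    split_ifs
    · have e1 : p + (((n + 1 : ℤ) : ℝ) * h) • v = p + ((n : ℝ) * h) • v + h • v := by
        push_cast; module
      have e2 : p + (((n - 1 : ℤ) : ℝ) * h) • v = p + ((n : ℝ) * h) • v - h • v := by
        push_cast; module
      rw [dirDiff, e1, e2]
    · simp

/-- Iterated directional difference quotients are bounded uniformly in the step. -/
theorem exists_bound_dirDiff_iterate (v : ℝ × ℝ) (k : ℕ) (F : ℝ × ℝ → ℂ) (hF : ContDiff ℝ k F)
    (h1 : ∀ x y : ℝ, F (x + 2 * Real.pi, y) = F (x, y))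
    (h2 : ∀ x y : ℝ, F (x, y + 2 * Real.pi) = F (x, y)) :
    ∃ B : ℝ, ∀ h : ℝ, 0 < h → ∀ p, ‖(dirDiff h v)^[k] F p‖ ≤ B := by
  induction k generalizing F with
  | zero =>
    have hc : Continuous F := hF.continuous
    have hK : IsCompact (Set.Icc (0 : ℝ) (2 * Real.pi) ×ˢ Set.Icc (0 : ℝ) (2 * Real.pi)) :=
      isCompact_Icc.prod isCompact_Icc
    obtain ⟨B, hB⟩ := hK.exists_bound_of_continuousOn hc.continuousOn
    refine ⟨B, fun h _ p => ?_⟩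
    obtain ⟨x, y⟩ := p
    obtain ⟨x', hx', hxe⟩ := Function.Periodic.exists_mem_Ico₀
      (f := fun x => F (x, y)) (fun x => h1 x y) Real.two_pi_pos x
    obtain ⟨y', hy', hye⟩ := Function.Periodic.exists_mem_Ico₀
      (f := fun y => F (x', y)) (fun y => h2 x' y) Real.two_pi_pos y
    simp only [Function.iterate_zero, id]
    rw [hxe, hye]
    exact hB _ ⟨Set.Ico_subset_Icc_self hx', Set.Ico_subset_Icc_self hy'⟩
  | succ k ih =>
    have hd : Differentiable ℝ F := hF.differentiable (by simp)
    have hF' : ContDiff ℝ k (fun p => fderiv ℝ F p v) := by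
      refine (hF.fderiv_right (m := k) ?_).clm_apply contDiff_const
      push_cast; exact le_rfl
    have key : ∀ (q : ℝ × ℝ), (∀ p, F (p + q) = F p) → ∀ p, fderiv ℝ F (p + q) = fderiv ℝ F p := by
      intro q hq p
      rw [← fderiv_comp_add_right]
      simp only [hq]
    obtain ⟨B, hB⟩ := ih (fun p => fderiv ℝ F p v) hF'
      (fun x y => by
        have := key (2 * Real.pi, 0) (fun p => by obtain ⟨x, y⟩ := p; simp [h1]) (x, y)
        simpa using congrArg (fun L => L v) this)
      (fun x y => by
        have := key (0, 2 * Real.pi) (fun p => by obtain ⟨x, y⟩ := p; simp [h2]) (x, y)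
        simpa using congrArg (fun L => L v) this)
    refine ⟨B, fun h hh p => ?_⟩
    have comm : ∀ l : ℕ, ∀ (p : ℝ × ℝ) (t : ℝ), HasDerivAt
        (fun s : ℝ => (dirDiff h v)^[l] F (p + s • v))
        ((dirDiff h v)^[l] (fun p => fderiv ℝ F p v) (p + t • v)) t := by
      intro l
      induction l with
      | zero =>
        intro p t
        have hl : HasDerivAt (fun s : ℝ => p + s • v) v t := by
          simpa using ((hasDerivAt_id t).smul_const v).const_add p
        exact (hd (p + t • v)).hasFDerivAt.comp_hasDerivAt t hl
      | succ l ihl =>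
        intro p t
        simp only [Function.iterate_succ_apply', dirDiff]
        have a1 := ihl (p + h • v) t
        have a2 := ihl (p - h • v) t
        have e1 : ∀ s : ℝ, p + s • v + h • v = p + h • v + s • v := fun s => by abel
        have e2 : ∀ s : ℝ, p + s • v - h • v = p - h • v + s • v := fun s => by abel
        simp only [e1, e2]
        exact (a1.sub a2).const_mul _
    have mv := convex_univ.norm_image_sub_le_of_norm_hasDerivWithin_le (𝕜 := ℝ)
      (f := fun s : ℝ => (dirDiff h v)^[k] F (p + s • v)) (C := B) (x := -h) (y := h)
      (fun t _ => (comm k p t).hasDerivWithinAt) (fun t _ => hB h hh _)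
      (Set.mem_univ _) (Set.mem_univ _)
    rw [Function.iterate_succ_apply', dirDiff, norm_mul, norm_inv]
    have hn : ‖(2 * (h : ℂ))‖ = 2 * h := by
      rw [norm_mul, Complex.norm_real, Real.norm_of_nonneg hh.le]; norm_num
    have hn' : ‖h - -h‖ = 2 * h := by
      rw [Real.norm_of_nonneg (by linarith)]; ring
    rw [hn, inv_mul_le_iff₀ (by positivity)]
    rw [hn'] at mv
    simp only [neg_smul, ← sub_eq_add_neg] at mv
    linarith

end Differences

section Filter

theorem IsFilter.le_sq_sub_pi {ρ : ℝ → ℝ} (hρ : IsFilter ρ) :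
    ∃ K : ℝ, 0 ≤ K ∧ ∀ x ∈ Set.Icc 0 Real.pi, ρ x ≤ K * (Real.pi - x) ^ 2 := by
  obtain ⟨r, hr, hsm⟩ := hρ.smooth
  have hsm2 : ContDiff ℝ 2 ρ := hsm.of_le (by exact_mod_cast hr.le)
  have hd : Differentiable ℝ ρ := hsm2.differentiable (by norm_num)
  have hd1 : ContDiff ℝ 1 (deriv ρ) := by
    have : ContDiff ℝ (1 + 1) ρ := by simpa [one_add_one_eq_two] using hsm2
    exact (contDiff_succ_iff_deriv.1 this).2.2
  have hdd : Differentiable ℝ (deriv ρ) := hd1.differentiable (by norm_num)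
  have hc2 : Continuous (deriv (deriv ρ)) := hd1.continuous_deriv (by norm_num)
  obtain ⟨K, hK⟩ := (isCompact_Icc (a := (0 : ℝ)) (b := Real.pi)).exists_bound_of_continuousOn
    hc2.continuousOn
  have hpi := Real.pi_pos
  have hpm : Real.pi ∈ Set.Icc 0 Real.pi := ⟨hpi.le, le_rfl⟩
  have hK0 : 0 ≤ K := (norm_nonneg _).trans (hK _ hpm)
  have b1 : ∀ x ∈ Set.Icc 0 Real.pi, ‖deriv ρ x‖ ≤ K * (Real.pi - x) := by
    intro x hx
    have := (convex_Icc 0 Real.pi).norm_image_sub_le_of_norm_deriv_le (𝕜 := ℝ)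
      (f := deriv ρ) (fun y _ => hdd y) hK hpm hx
    rw [hρ.deriv_zero_at_pi, sub_zero, norm_sub_rev x,
      Real.norm_of_nonneg (by linarith [hx.2] : 0 ≤ Real.pi - x)] at this
    exact this
  refine ⟨K, hK0, fun x hx => ?_⟩
  have := (convex_Icc x Real.pi).norm_image_sub_le_of_norm_deriv_le (𝕜 := ℝ)
    (f := ρ) (C := K * (Real.pi - x)) (fun y _ => hd y)
    (fun y hy => (b1 y ⟨hx.1.trans hy.1, hy.2⟩).trans (by gcongr; exact hy.1))
    ⟨hx.2, le_rfl⟩ ⟨le_rfl, hx.2⟩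
  rw [hρ.zero_at_pi, sub_zero, norm_sub_rev x,
    Real.norm_of_nonneg (by linarith [hx.2] : 0 ≤ Real.pi - x),
    Real.norm_of_nonneg (hρ.nonneg x)] at this
  linarith

theorem IsFilter.exists_bound {ρ : ℝ → ℝ} (hρ : IsFilter ρ) :
    ∃ C : ℝ, 1 ≤ C ∧ ∀ x : ℝ, |x| ≤ Real.pi → ∀ n : ℕ, n ≤ 2 →
      |x| ^ n * ρ x ≤ C * |Real.sin x| ^ n := by
  obtain ⟨K, hK0, hK⟩ := hρ.le_sq_sub_pi
  obtain ⟨r, hr, hsm⟩ := hρ.smooth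
  obtain ⟨A, hA⟩ := (isCompact_Icc (a := (0 : ℝ)) (b := Real.pi)).exists_bound_of_continuousOn
    hsm.continuous.continuousOn
  have hpi := Real.pi_pos
  have hpi4 := Real.pi_le_four
  have hA0 : 0 ≤ A := (norm_nonneg _).trans (hA 0 ⟨le_rfl, hpi.le⟩)
  set C : ℝ := 1 + 4 * A + 64 * K with hCdef
  have hC1 : 1 ≤ C := by linarith
  have hAC : A ≤ C := by linarith
  have nn : ∀ x ∈ Set.Icc 0 Real.pi, ∀ n : ℕ, n ≤ 2 → x ^ n * ρ x ≤ C * |Real.sin x| ^ n := by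
    intro x hx
    have hρ0 := hρ.nonneg x
    have hρA : ρ x ≤ A := (le_abs_self _).trans (hA x hx)
    have hs0 := Real.sin_nonneg_of_nonneg_of_le_pi hx.1 hx.2
    have two : x ^ 2 * ρ x ≤ C * Real.sin x ^ 2 := by
      rcases le_total x (Real.pi / 2) with hx2 | hx2
      · have hj := Real.mul_le_sin hx.1 hx2
        have hj' : x ≤ 2 * Real.sin x := by
          rw [div_mul_eq_mul_div, div_le_iff₀ hpi] at hj
          nlinarith
        have : x ^ 2 ≤ 4 * Real.sin x ^ 2 := by nlinarith [hx.1]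
        calc x ^ 2 * ρ x ≤ (4 * Real.sin x ^ 2) * A := by gcongr
          _ ≤ C * Real.sin x ^ 2 := by nlinarith [sq_nonneg (Real.sin x)]
      · have hj := Real.mul_le_sin (x := Real.pi - x) (by linarith [hx.2]) (by linarith)
        rw [Real.sin_pi_sub] at hj
        have hy0 : 0 ≤ Real.pi - x := by linarith [hx.2]
        have hj' : Real.pi - x ≤ 2 * Real.sin x := by
          rw [div_mul_eq_mul_div, div_le_iff₀ hpi] at hj
          nlinarith
        have h4 : (Real.pi - x) ^ 2 ≤ 4 * Real.sin x ^ 2 := by nlinarith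
        have h16 : x ^ 2 ≤ 16 := by nlinarith [hx.1, hx.2]
        calc x ^ 2 * ρ x ≤ 16 * (K * (4 * Real.sin x ^ 2)) := by
              gcongr
              exact (hK x hx).trans (by gcongr)
          _ ≤ C * Real.sin x ^ 2 := by nlinarith [sq_nonneg (Real.sin x)]
    rw [abs_of_nonneg hs0]
    intro n hn
    interval_cases n
    · simpa using hρA.trans hAC
    · have hsq : (x * ρ x) ^ 2 ≤ (C * Real.sin x) ^ 2 := by
        calc (x * ρ x) ^ 2 = (x ^ 2 * ρ x) * ρ x := by ring
          _ ≤ (C * Real.sin x ^ 2) * C := by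
              gcongr
              exact hρA.trans hAC
          _ = _ := by ring
      simpa using (le_abs_self _).trans (abs_le_of_sq_le_sq hsq (by positivity))
    · exact two
  refine ⟨C, hC1, fun x hx n hn => ?_⟩
  have hρx : ρ x = ρ |x| := by
    rcases abs_choice x with h | h <;> rw [h]
    exact (hρ.even x).symm
  have hsx : |Real.sin x| = abs (Real.sin |x|) := by
    rcases abs_choice x with h | h <;> rw [h]
    rw [Real.sin_neg, abs_neg]
  rw [hρx, hsx]
  exact nn |x| ⟨abs_nonneg x, hx⟩ n hn

theorem abs_gridPt_le {N k : ℤ} (hN : 2 ≤ N) (he : Even N) (hk : k ∈ idxs N) :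
    |gridPt N k| ≤ Real.pi := by
  have hN0 : (0 : ℝ) < N := by exact_mod_cast (by omega : 0 < N)
  have hh := hgrid_pos hN
  unfold idxs at hk
  rw [Finset.mem_Icc] at hk
  obtain ⟨M, rfl⟩ := he
  have hk' : |k| ≤ M := by rw [abs_le]; omega
  have hkr : |(k : ℝ)| ≤ M := by exact_mod_cast hk'
  unfold gridPt
  rw [abs_mul, abs_of_pos hh]
  calc |(k : ℝ)| * hgrid (M + M) ≤ M * hgrid (M + M) := by gcongr
    _ = Real.pi := by
      unfold hgrid
      have : (M : ℝ) ≠ 0 := by exact_mod_cast (by omega : M ≠ 0)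
      push_cast
      field_simp
      ring

theorem norm_ctrSymbol (N m : ℤ) (hN : 2 ≤ N) :
    ‖ctrSymbol N m‖ = |Real.sin (gridPt N m)| / hgrid N := by
  unfold ctrSymbol
  rw [norm_mul, Complex.norm_I, one_mul, Complex.norm_real, Real.norm_eq_abs, abs_div,
    abs_of_pos (hgrid_pos hN)]

theorem abs_pow_mul_filter_le {ρ : ℝ → ℝ} {C : ℝ}
    (hC : ∀ x : ℝ, |x| ≤ Real.pi → ∀ n : ℕ, n ≤ 2 → |x| ^ n * ρ x ≤ C * |Real.sin x| ^ n)
    {N m : ℤ} (hN : 2 ≤ N) (he : Even N) (hm : m ∈ idxs N) {n : ℕ} (hn : n ≤ 2) :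
    |(m : ℝ)| ^ n * ρ (gridPt N m) ≤ C * ‖ctrSymbol N m‖ ^ n := by
  have hh := hgrid_pos hN
  have h := hC _ (abs_gridPt_le hN he hm) n hn
  have hx : |gridPt N m| = |(m : ℝ)| * hgrid N := by
    unfold gridPt; rw [abs_mul, abs_of_pos hh]
  rw [hx] at h
  rw [norm_ctrSymbol N m hN, div_pow, ← mul_div_assoc, le_div_iff₀ (by positivity)]
  calc _ = (|(m : ℝ)| * hgrid N) ^ n * ρ (gridPt N m) := by ring
    _ ≤ _ := h

theorem dft_Dh_iterate {N : ℤ} (hN : 2 ≤ N) (he : Even N) (ρ : ℝ → ℝ) (g : ℤ → ℂ) (k : ℕ)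
    {m : ℤ} (hm : m ∈ idxs N) :
    dft N ((Dh N ρ)^[k] g) m
      = (Complex.I * (m : ℂ) * (ρ (gridPt N m) : ℂ)) ^ k * dft N g m := by
  induction k with
  | zero => simp
  | succ k ih =>
    rw [Function.iterate_succ_apply', Dh, dft_idft hN he _ hm, ih]
    ring

theorem filter_mul_dft_Sh_iterate {N : ℤ} (hN : 2 ≤ N) (he : Even N) {ρ : ℝ → ℝ}
    (hρ : IsFilter ρ) (φ : ℤ → ℂ) (k : ℕ) {m : ℤ} (hm : m ∈ idxs N) :
    (ρ (gridPt N m) : ℂ) * dft N ((Sh N)^[k] φ) m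
      = (ρ (gridPt N m) : ℂ) * ((Complex.I * (m : ℂ)) ^ k * dft N φ m) := by
  by_cases hm2 : m = N / 2
  · have : gridPt N m = Real.pi := by
      obtain ⟨M, rfl⟩ := he
      have hm' : m = M := by omega
      subst hm'
      have : (m : ℝ) ≠ 0 := by exact_mod_cast (by omega : m ≠ 0)
      unfold gridPt hgrid
      push_cast
      field_simp
      ring
    simp [this, hρ.zero_at_pi]
  · congr 1
    induction k with
    | zero => simp
    | succ k ih =>
      rw [Function.iterate_succ_apply', Sh, dft_idft hN he _ hm, if_neg hm2, ih]
      ring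

end Filter

section Kernel

theorem Rh_eq_sum (N : ℤ) (f : ℝ × ℝ → ℂ) (φ : ℤ → ℂ) (i : ℤ) :
    Rh N f φ i = ∑ j ∈ idxs N,
      (if Odd (j - i) then f (gridPt N i, gridPt N j) else 0) * (2 * (hgrid N : ℂ) * φ j) := by
  rw [Rh, Finset.sum_filter, Finset.mul_sum]
  refine Finset.sum_congr rfl fun j _ => ?_
  split_ifs
  · ring
  · simp

theorem gridPt_add_period {N : ℤ} (hN : 2 ≤ N) (n : ℤ) :
    gridPt N (n + N) = gridPt N n + 2 * Real.pi := by
  have hN0 : (N : ℝ) ≠ 0 := by exact_mod_cast (by omega : N ≠ 0)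
  unfold gridPt hgrid
  push_cast
  field_simp

theorem Rh_periodic {N : ℤ} (hN : 2 ≤ N) (he : Even N) {f : ℝ × ℝ → ℂ}
    (hper1 : ∀ x y : ℝ, f (x + 2 * Real.pi, y) = f (x, y)) (φ : ℤ → ℂ) (i : ℤ) :
    Rh N f φ (i + N) = Rh N f φ i := by
  simp only [Rh_eq_sum, gridPt_add_period hN, hper1]
  have : ∀ j, Odd (j - (i + N)) ↔ Odd (j - i) := by
    intro j
    obtain ⟨M, rfl⟩ := he
    simp only [Int.odd_iff]; omega
  simp only [this]

theorem norm_sum_mul_le {s : Finset ℤ} {a ψ : ℤ → ℂ} {B h : ℝ} (hh : 0 ≤ h)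
    (ha : ∀ j, ‖a j‖ ≤ B) :
    ‖∑ j ∈ s, a j * (2 * (h : ℂ) * ψ j)‖ ≤ 2 * B * (h * ∑ j ∈ s, ‖ψ j‖) := by
  refine (norm_sum_le _ _).trans ?_
  rw [Finset.mul_sum, Finset.mul_sum]
  refine Finset.sum_le_sum fun j _ => ?_
  rw [norm_mul, norm_mul, norm_mul, Complex.norm_real, Real.norm_of_nonneg hh]
  calc ‖a j‖ * (‖(2 : ℂ)‖ * h * ‖ψ j‖) ≤ B * (‖(2 : ℂ)‖ * h * ‖ψ j‖) := by
        gcongr; exact ha j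
    _ = _ := by rw [Complex.norm_ofNat]; ring

theorem norm_ctrDiff_iterate_odd_lattice_le {h B : ℝ} {v : ℝ × ℝ} {k : ℕ} {F : ℝ × ℝ → ℂ}
    (hB0 : 0 ≤ B) (hB : ∀ p, ‖(dirDiff h v)^[k] F p‖ ≤ B) (p : ℝ × ℝ) (a n : ℤ) :
    ‖(ctrDiff h)^[k] (fun n : ℤ => if Odd (n + a) then F (p + ((n : ℝ) * h) • v) else 0) n‖
      ≤ B := by
  rw [ctrDiff_iterate_odd_lattice]
  dsimp only
  split_ifs
  · exact hB _
  · simpa using hB0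

theorem norm_ctrDiff_iterate_Rh_le {N : ℤ} (hN : 2 ≤ N) {f : ℝ × ℝ → ℂ} {k : ℕ} {B : ℝ}
    (hB0 : 0 ≤ B) (hB : ∀ p, ‖(dirDiff (hgrid N) (1, 0))^[k] f p‖ ≤ B) (ψ : ℤ → ℂ) (i : ℤ) :
    ‖(ctrDiff (hgrid N))^[k] (Rh N f ψ) i‖ ≤ 2 * B * (hgrid N * ∑ j ∈ idxs N, ‖ψ j‖) := by
  have e : Rh N f ψ = fun i => ∑ j ∈ idxs N,
      (fun j n : ℤ => if Odd (n + j) then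
        f ((0, gridPt N j) + ((n : ℝ) * hgrid N) • ((1 : ℝ), (0 : ℝ))) else 0) j i
        * (2 * (hgrid N : ℂ) * ψ j) := by
    funext i
    rw [Rh_eq_sum]
    refine Finset.sum_congr rfl fun j _ => ?_
    have : Odd (j - i) ↔ Odd (i + j) := by simp only [Int.odd_iff]; omega
    simp [this, gridPt]
  rw [e, ctrDiff_iterate_sum (w := fun j => 2 * (hgrid N : ℂ) * ψ j)]
  exact norm_sum_mul_le (hgrid_pos hN).le
    fun j => norm_ctrDiff_iterate_odd_lattice_le hB0 hB (0, gridPt N j) j i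

theorem norm_Rh_ctrDiff_iterate_le {N : ℤ} (hN : 2 ≤ N) (he : Even N) {f : ℝ × ℝ → ℂ}
    (hper2 : ∀ x y : ℝ, f (x, y + 2 * Real.pi) = f (x, y)) {k : ℕ} {B : ℝ}
    (hB0 : 0 ≤ B) (hB : ∀ p, ‖(dirDiff (hgrid N) (0, 1))^[k] f p‖ ≤ B) {w : ℤ → ℂ}
    (hw : ∀ n, w (n + N) = w n) (i : ℤ) :
    ‖Rh N f ((ctrDiff (hgrid N))^[k] w) i‖ ≤ 2 * B * (hgrid N * ∑ j ∈ idxs N, ‖w j‖) := by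
  set G : ℤ → ℂ := fun n => if Odd (n + -i) then
    f ((gridPt N i, 0) + ((n : ℝ) * hgrid N) • ((0 : ℝ), (1 : ℝ))) else 0 with hGdef
  have hG' : ∀ n, G n = if Odd (n - i) then f (gridPt N i, gridPt N n) else 0 := by
    intro n
    simp [hGdef, gridPt, sub_eq_add_neg]
  have hG : ∀ n, G (n + N) = G n := by
    intro n
    have : Odd (n + N - i) ↔ Odd (n - i) := by
      obtain ⟨M, rfl⟩ := he
      simp only [Int.odd_iff]; omega
    simp only [hG', this, gridPt_add_period hN, hper2]
  have hc : ∀ u : ℤ → ℂ, ∀ a : ℤ → ℂ, ∑ j ∈ idxs N, a j * (2 * (hgrid N : ℂ) * u j)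
      = 2 * (hgrid N : ℂ) * ∑ j ∈ idxs N, a j * u j := by
    intro u a
    rw [Finset.mul_sum]
    exact Finset.sum_congr rfl fun j _ => by ring
  rw [Rh_eq_sum]
  simp only [← hG']
  rw [hc, norm_mul, norm_sum_mul_ctrDiff_iterate hN he (hgrid N) hw k hG, ← norm_mul, ← hc]
  exact norm_sum_mul_le (hgrid_pos hN).le
    fun j => norm_ctrDiff_iterate_odd_lattice_le hB0 hB (gridPt N i, 0) (-i) j

end Kernel

theorem exists_bound_dirDiff_le_two {f : ℝ × ℝ → ℂ}
    (hper1 : ∀ x y : ℝ, f (x + 2 * Real.pi, y) = f (x, y))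
    (hper2 : ∀ x y : ℝ, f (x, y + 2 * Real.pi) = f (x, y))
    (hf : ContDiff ℝ 4 f) (v : ℝ × ℝ) :
    ∃ B : ℝ, ∀ k ≤ 2, ∀ h : ℝ, 0 < h → ∀ p, ‖(dirDiff h v)^[k] f p‖ ≤ B := by
  have hk : ∀ k : ℕ, ∃ B : ℝ, k ≤ 2 → ∀ h : ℝ, 0 < h → ∀ p, ‖(dirDiff h v)^[k] f p‖ ≤ B := by
    intro k
    by_cases hk : k ≤ 2
    · obtain ⟨B, hB⟩ := exists_bound_dirDiff_iterate v k f
        (hf.of_le (by exact_mod_cast hk.trans (by norm_num))) hper1 hper2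
      exact ⟨B, fun _ => hB⟩
    · exact ⟨0, fun h => absurd h hk⟩
  choose B hB using hk
  refine ⟨max (B 0) (max (B 1) (B 2)), fun k hk h hh p => (hB k hk h hh p).trans ?_⟩
  interval_cases k <;> simp

/-- Lemma 8.1: `R_h(φ^p)` is a second-order smoothing operator
`A_{-2}(φ)`. -/
theorem Rh_filtered_smoothing (f : ℝ × ℝ → ℂ)
    (hper1 : ∀ x y : ℝ, f (x + 2 * Real.pi, y) = f (x, y))
    (hper2 : ∀ x y : ℝ, f (x, y + 2 * Real.pi) = f (x, y))
    (hf : ContDiff ℝ 4 f) (ρ : ℝ → ℝ) (hρ : IsFilter ρ) :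
    ∃ c : ℝ, 0 < c ∧ ∀ N : ℤ, 2 ≤ N → Even N → ∀ φ : ℤ → ℂ, ∀ k : ℕ, k ≤ 2 →
      l2norm N ((Dh N ρ)^[k] (Rh N f (filterP N ρ φ))) ≤ c * l2norm N φ ∧
      l2norm N (Rh N f (filterP N ρ ((Sh N)^[k] φ))) ≤ c * l2norm N φ := by
  obtain ⟨B₁, hB₁⟩ := exists_bound_dirDiff_le_two hper1 hper2 hf (1, 0)
  obtain ⟨B₂, hB₂⟩ := exists_bound_dirDiff_le_two hper1 hper2 hf (0, 1)
  obtain ⟨C, hC1, hC⟩ := hρ.exists_bound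
  set B := max 1 (max B₁ B₂) with hBdef
  have hB1 : 1 ≤ B := le_max_left _ _
  have hB₁B : B₁ ≤ B := (le_max_left _ _).trans (le_max_right _ _)
  have hB₂B : B₂ ≤ B := (le_max_right _ _).trans (le_max_right _ _)
  have hpi := Real.pi_pos
  have hC0 : 0 ≤ C := by linarith
  have hB0 : 0 ≤ B := by linarith
  refine ⟨2 * Real.pi * (2 * B) * C ^ 3, by positivity, fun N hN he φ k hk => ⟨?_, ?_⟩⟩
  · have hh := hgrid_pos hN
    have hP : l2norm N (filterP N ρ φ) ≤ C * l2norm N φ := by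
      refine l2norm_le_of_dft_le hN he hC0 fun m hm => ?_
      rw [filterP, dft_idft hN he _ hm, norm_mul, Complex.norm_real,
        Real.norm_of_nonneg (hρ.nonneg _)]
      have := abs_pow_mul_filter_le hC hN he hm (n := 0) (by norm_num)
      simp only [pow_zero, one_mul, mul_one] at this
      gcongr
    have hper := Rh_periodic hN he hper1 (filterP N ρ φ)
    have hD : l2norm N ((Dh N ρ)^[k] (Rh N f (filterP N ρ φ)))
        ≤ C ^ k * l2norm N ((ctrDiff (hgrid N))^[k] (Rh N f (filterP N ρ φ))) := by
      refine l2norm_le_of_dft_le hN he (by positivity) fun m hm => ?_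
      rw [dft_Dh_iterate hN he _ _ _ hm, dft_ctrDiff_iterate hN he hper, norm_mul, norm_mul,
        norm_pow, norm_pow, ← mul_assoc, ← mul_pow]
      gcongr
      have := abs_pow_mul_filter_le hC hN he hm (n := 1) (by norm_num)
      simp only [pow_one] at this
      rw [norm_mul, norm_mul, Complex.norm_I, one_mul, Complex.norm_real,
        Real.norm_of_nonneg (hρ.nonneg _), Complex.norm_intCast]
      exact this
    have hR := l2norm_le_of_kernel_bound hN he (by positivity : 0 ≤ 2 * B)
      fun i (_ : i ∈ idxs N) => norm_ctrDiff_iterate_Rh_le hN hB0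
        (fun p => (hB₁ k hk _ hh p).trans hB₁B) (filterP N ρ φ) i
    have hCk : C ^ k ≤ C ^ 2 := pow_le_pow_right₀ hC1 hk
    calc _ ≤ C ^ k * l2norm N ((ctrDiff (hgrid N))^[k] (Rh N f (filterP N ρ φ))) := hD
      _ ≤ C ^ 2 * (2 * Real.pi * (2 * B) * (C * l2norm N φ)) := by
        gcongr
        · exact Real.sqrt_nonneg _
        · exact hR.trans (by gcongr)
      _ = _ := by ring
  · have hh := hgrid_pos hN
    set e : ℤ → ℂ := fun m => (ρ (gridPt N m) : ℂ) *
      ((Complex.I * (m : ℂ)) ^ k * dft N φ m) / ctrSymbol N m ^ k with hedef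
    have hb : ∀ m ∈ idxs N, ‖(ρ (gridPt N m) : ℂ) * (Complex.I * (m : ℂ)) ^ k‖
        ≤ C * ‖ctrSymbol N m ^ k‖ := by
      intro m hm
      rw [norm_mul, norm_pow, norm_mul, Complex.norm_I, one_mul, Complex.norm_real,
        Real.norm_of_nonneg (hρ.nonneg _), Complex.norm_intCast, norm_pow, mul_comm]
      exact abs_pow_mul_filter_le hC hN he hm hk
    have hw : filterP N ρ ((Sh N)^[k] φ) = (ctrDiff (hgrid N))^[k] (idft N e) := by
      rw [ctrDiff_iterate_idft, filterP]
      refine idft_congr fun m hm => ?_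
      rw [filter_mul_dft_Sh_iterate hN he hρ φ k hm, hedef]
      by_cases h0 : ctrSymbol N m ^ k = 0
      · have := hb m hm
        rw [h0, norm_zero, mul_zero, norm_le_zero_iff] at this
        rw [h0, ← mul_assoc, this]
        simp
      · field_simp
    have hE : l2norm N (idft N e) ≤ C * l2norm N φ := by
      refine l2norm_le_of_dft_le hN he hC0 fun m hm => ?_
      rw [dft_idft hN he _ hm, hedef]
      dsimp only
      rw [← mul_assoc, norm_div, norm_mul]
      refine div_le_of_le_mul₀ (norm_nonneg _) (by positivity) ?_
      calc _ ≤ C * ‖ctrSymbol N m ^ k‖ * ‖dft N φ m‖ := by gcongr; exact hb m hm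
        _ = _ := by ring
    rw [hw]
    have hR := l2norm_le_of_kernel_bound hN he (by positivity : 0 ≤ 2 * B)
      fun i (_ : i ∈ idxs N) => norm_Rh_ctrDiff_iterate_le hN he hper2 hB0
        (fun p => (hB₂ k hk _ hh p).trans hB₂B) (idft_periodic hN e) i
    have hC3 : C ≤ C ^ 3 := le_self_pow₀ hC1 (by norm_num)
    calc _ ≤ 2 * Real.pi * (2 * B) * (C * l2norm N φ) := hR.trans (by gcongr)
      _ ≤ 2 * Real.pi * (2 * B) * (C ^ 3 * l2norm N φ) := by
        gcongr
        exact Real.sqrt_nonneg _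
      _ = _ := by ring

end
end
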